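/- Let n ≥ 1 and let σ ∈ 𝒮(ℝⁿ×ℝⁿ) be real-valued, vanishing for x outside some compact set, and satisfying σ(x,ξ) ≥ 0 for all (x,ξ) ∈ ℝⁿ×ℝⁿ. Then there exists a constant C > 0 such that for all ε ∈ (0,1] and all f ∈ 𝒮(ℝⁿ): Re ∫_{ℝⁿ} (∫_{ℝⁿ} e^{2πi x·ξ} σ(x, εξ) 𝓕f(ξ) dξ) · conj(f(x)) dx ≥ −C ε ∫_{ℝⁿ} |f(x)|² dx. (Theorem 1.3, semiclassical Gårding inequality, in the Euclidean case G = ℝⁿ.) -/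

import Mathlib

open MeasureTheory Complex

noncomputable section

/-- `e^{2πit}`. -/
def expi (t : ℝ) : ℂ := Complex.exp (2 * (Real.pi : ℂ) * Complex.I * (t : ℂ))

/-- Dot product on `ℝⁿ`. -/
def dotp {n : ℕ} (x y : Fin n → ℝ) : ℝ := ∑ i, x i * y i

/-- Euclidean Fourier transform `𝓕f(ξ) = ∫ f(y) e^{-2πi y·ξ} dy`. -/
def FT {n : ℕ} (f : (Fin n → ℝ) → ℂ) (ξ : Fin n → ℝ) : ℂ :=
  ∫ y, f y * expi (-(dotp y ξ))

/-- Bargmann-type transform `B_a[f](x,ξ) = ∫ f(y) a(y-x) e^{-2πi y·ξ} dy`. -/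
def Barg {n : ℕ} (a f : (Fin n → ℝ) → ℂ) (x ξ : Fin n → ℝ) : ℂ :=
  ∫ y, f y * a (y - x) * expi (-(dotp y ξ))

/-- Wick quantization with window `a`. -/
def WickOp {n : ℕ} (a : (Fin n → ℝ) → ℂ) (σ : (Fin n → ℝ) → (Fin n → ℝ) → ℂ)
    (f : (Fin n → ℝ) → ℂ) (y : Fin n → ℝ) : ℂ :=
  ∫ p : (Fin n → ℝ) × (Fin n → ℝ),
    σ p.1 p.2 * Barg a f p.1 p.2 * (starRingEnd ℂ) (a (y - p.1)) * expi (dotp y p.2)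

/-- Kohn–Nirenberg quantization. -/
def OpKN {n : ℕ} (σ : (Fin n → ℝ) → (Fin n → ℝ) → ℂ) (f : (Fin n → ℝ) → ℂ)
    (x : Fin n → ℝ) : ℂ :=
  ∫ ξ, expi (dotp x ξ) * σ x ξ * FT f ξ

/-- Partial derivative in the `i`-th coordinate direction. -/
def pd {n : ℕ} (i : Fin n) (F : (Fin n → ℝ) → ℂ) : (Fin n → ℝ) → ℂ :=
  fun x => fderiv ℝ F x (Pi.single i 1)

/-- Multi-index derivative `∂^α`. -/
def md {n : ℕ} (α : Fin n → ℕ) (F : (Fin n → ℝ) → ℂ) : (Fin n → ℝ) → ℂ :=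
  (((List.finRange n).map fun i => (pd i)^[α i]).foldr (· ∘ ·) id) F

/-- Mixed derivative `∂_x^β ∂_ξ^α σ`. -/
def mixedD {n : ℕ} (β α : Fin n → ℕ) (σ : (Fin n → ℝ) → (Fin n → ℝ) → ℂ) :
    (Fin n → ℝ) → (Fin n → ℝ) → ℂ :=
  fun x ξ => md β (fun x' => md α (fun ξ' => σ x' ξ') ξ) x

/-- The weight `1 + |ξ|²` (Euclidean norm squared). -/
def wt {n : ℕ} (ξ : Fin n → ℝ) : ℝ := 1 + ∑ i, ξ i ^ 2

/-- Length `|α|` of a multi-index, as a real number. -/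
def mOrd {n : ℕ} (α : Fin n → ℕ) : ℝ := ∑ i, (α i : ℝ)

/-- The Hörmander class `S^m_{ρ,δ}(ℝⁿ)`. -/
def SymbolClass {n : ℕ} (m ρ δ : ℝ) (σ : (Fin n → ℝ) → (Fin n → ℝ) → ℂ) : Prop :=
  (ContDiff ℝ (⊤ : ℕ∞) fun p : (Fin n → ℝ) × (Fin n → ℝ) => σ p.1 p.2) ∧
  ∀ α β : Fin n → ℕ, ∃ C > 0, ∀ x ξ,
    ‖mixedD β α σ x ξ‖ ≤ C * wt ξ ^ ((m - ρ * mOrd α + δ * mOrd β) / 2)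

/-- The seminorm `‖σ‖_{S^m_{ρ,δ},α,β}`. -/
def hSem {n : ℕ} (m ρ δ : ℝ) (α β : Fin n → ℕ)
    (σ : (Fin n → ℝ) → (Fin n → ℝ) → ℂ) : ℝ :=
  ⨆ p : (Fin n → ℝ) × (Fin n → ℝ),
    wt p.2 ^ (-(m - ρ * mOrd α + δ * mOrd β) / 2) * ‖mixedD β α σ p.1 p.2‖

/-- Squared Sobolev norm `‖f‖²_{H^s}`. -/
def sobSq {n : ℕ} (s : ℝ) (f : (Fin n → ℝ) → ℂ) : ℝ :=
  ∫ ξ, wt ξ ^ s * ‖FT f ξ‖ ^ 2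

end

open scoped SchwartzMap FourierTransform

theorem sg_norm_expi (t : ℝ) : ‖expi t‖ = 1 := by
  unfold expi
  have : (2 * (Real.pi : ℂ) * Complex.I * (t : ℂ)) = ((2 * Real.pi * t : ℝ) : ℂ) * Complex.I := by
    push_cast; ring
  rw [this, Complex.norm_exp_ofReal_mul_I]

theorem sg_expi_add (s t : ℝ) : expi (s + t) = expi s * expi t := by
  unfold expi
  rw [← Complex.exp_add]; congr 1; push_cast; ring

theorem sg_expi_conj (t : ℝ) : (starRingEnd ℂ) (expi t) = expi (-t) := by
  unfold expi
  rw [← Complex.exp_conj]; congr 1; simp [Complex.conj_ofNat]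

@[fun_prop]
theorem sg_expi_cont : Continuous expi := by
  unfold expi; fun_prop

@[fun_prop]
theorem sg_dotp_cont {n : ℕ} {X : Type*} [TopologicalSpace X] {u v : X → Fin n → ℝ}
    (hu : Continuous u) (hv : Continuous v) : Continuous fun x => dotp (u x) (v x) := by
  unfold dotp; fun_prop

theorem sg_dotp_add {n : ℕ} (x y z : Fin n → ℝ) : dotp (x + y) z = dotp x z + dotp y z := by
  simp [dotp, add_mul, Finset.sum_add_distrib]

theorem sg_dotp_smul {n : ℕ} (c : ℝ) (x z : Fin n → ℝ) : dotp (c • x) z = c * dotp x z := by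
  simp [dotp, Finset.mul_sum, mul_assoc]

theorem sg_dotp_comm {n : ℕ} (x z : Fin n → ℝ) : dotp x z = dotp z x := by
  simp [dotp, mul_comm]

theorem sg_bdd {D F : Type*} [NormedAddCommGroup D] [NormedSpace ℝ D] [NormedAddCommGroup F]
    [NormedSpace ℝ F] (f : 𝓢(D, F)) : ∃ C, 0 ≤ C ∧ ∀ x, ‖f x‖ ≤ C :=
  ⟨_, apply_nonneg _ _, fun x => SchwartzMap.norm_le_seminorm ℝ f x⟩

theorem sg_dom {X : Type*} [TopologicalSpace X] [MeasurableSpace X] [OpensMeasurableSpace X]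
    [SecondCountableTopology X] {μ : Measure X} {F : X → ℂ} {g : X → ℂ} (C : ℝ)
    (hF : Continuous F) (hg : Integrable g μ) (h : ∀ x, ‖F x‖ ≤ C * ‖g x‖) : Integrable F μ :=
  (hg.norm.const_mul C).mono' hF.aestronglyMeasurable (Filter.Eventually.of_forall h)

theorem sg_fourier_pair {ι : Type*} [Fintype ι] (g : 𝓢(ι → ℝ, ℂ)) :
    ∃ G : 𝓢(ι → ℝ, ℂ), (∀ ξ, G ξ = ∫ y, g y * expi (-(∑ i, y i * ξ i))) ∧
      ∀ y, g y = ∫ ξ, G ξ * expi (∑ i, y i * ξ i) := by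
  let e : EuclideanSpace ℝ ι ≃L[ℝ] (ι → ℝ) := PiLp.continuousLinearEquiv 2 ℝ (fun _ : ι => ℝ)
  let g' : 𝓢(EuclideanSpace ℝ ι, ℂ) := SchwartzMap.compCLMOfContinuousLinearEquiv ℂ e g
  let G : 𝓢(ι → ℝ, ℂ) := SchwartzMap.compCLMOfContinuousLinearEquiv ℂ e.symm (𝓕 g')
  have hg' : ∀ y, g' y = g (WithLp.ofLp y) := fun y => rfl
  have hG : ∀ ξ, G ξ = (𝓕 g') (WithLp.toLp 2 ξ) := fun y => rfl
  have hemb : MeasurableEmbedding (@WithLp.ofLp 2 (ι → ℝ)) :=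
    (MeasurableEquiv.toLp 2 (ι → ℝ)).symm.measurableEmbedding
  refine ⟨G, fun ξ => ?_, fun y => ?_⟩
  · rw [hG, SchwartzMap.fourier_coe, Real.fourier_eq',
      ← (PiLp.volume_preserving_ofLp ι).integral_comp hemb]
    congr 1; ext v
    simp only [hg', expi, smul_eq_mul, PiLp.inner_apply, RCLike.inner_apply, conj_trivial]
    rw [mul_comm]; congr 2; push_cast
    simp only [mul_comm]; ring
  · have h1 : g y = (𝓕⁻ (𝓕 g')) (WithLp.toLp 2 y) := by
      rw [FourierTransform.fourierInv_fourier_eq]; rfl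
    rw [h1, SchwartzMap.fourierInv_coe, Real.fourierInv_eq',
      ← (PiLp.volume_preserving_ofLp ι).integral_comp hemb]
    congr 1; ext v
    have : G (WithLp.ofLp v) = (𝓕 g') v := rfl
    simp only [this, expi, smul_eq_mul, PiLp.inner_apply, RCLike.inner_apply, conj_trivial]
    rw [mul_comm]; congr 2; push_cast
    simp only [mul_comm]; ring

theorem sg_fourier_one {n : ℕ} (g : 𝓢(Fin n → ℝ, ℂ)) :
    ∃ G : 𝓢(Fin n → ℝ, ℂ), (∀ ξ, FT g ξ = G ξ) ∧
      ∀ y, g y = ∫ ξ, G ξ * expi (dotp y ξ) := by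
  obtain ⟨G, h1, h2⟩ := sg_fourier_pair g
  exact ⟨G, fun ξ => (h1 ξ).symm, h2⟩

theorem sg_fourier_two {n : ℕ} (σ : 𝓢((Fin n → ℝ) × (Fin n → ℝ), ℝ)) :
    ∃ S : 𝓢((Fin n → ℝ) × (Fin n → ℝ), ℂ), 
      ∀ x ξ, ((σ (x, ξ) : ℝ) : ℂ) = ∫ p, S p * expi (dotp x p.1 + dotp ξ p.2) := by
  let e : ((Fin n ⊕ Fin n) → ℝ) ≃L[ℝ] ((Fin n → ℝ) × (Fin n → ℝ)) :=
    ContinuousLinearEquiv.sumPiEquivProdPi ℝ (Fin n) (Fin n) (fun _ => ℝ)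
  let σc : 𝓢((Fin n → ℝ) × (Fin n → ℝ), ℂ) :=
    SchwartzMap.postcompCLM (𝕜 := ℝ) Complex.ofRealCLM σ
  have hσc : ∀ p, σc p = ((σ p : ℝ) : ℂ) := fun p => rfl
  obtain ⟨G, h1, h2⟩ := sg_fourier_pair (SchwartzMap.compCLMOfContinuousLinearEquiv ℂ e σc)
  refine ⟨SchwartzMap.compCLMOfContinuousLinearEquiv ℂ e.symm G, fun x ξ => ?_⟩
  have h3 := h2 (e.symm (x, ξ))
  rw [SchwartzMap.compCLMOfContinuousLinearEquiv_apply, Function.comp_apply,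
    ContinuousLinearEquiv.apply_symm_apply, hσc] at h3
  rw [h3]
  have hm : MeasurePreserving (MeasurableEquiv.sumPiEquivProdPi (fun _ : Fin n ⊕ Fin n => ℝ)) volume volume :=
    volume_measurePreserving_sumPiEquivProdPi _
  rw [← hm.integral_comp (MeasurableEquiv.measurableEmbedding _)]
  congr 1; ext v
  rw [Fintype.sum_sum_type]
  have h4 : (SchwartzMap.compCLMOfContinuousLinearEquiv ℂ e.symm G)
      ((MeasurableEquiv.sumPiEquivProdPi fun _ => ℝ) v) = G v :=
    congrArg G (e.symm_apply_apply v)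
  rw [h4]
  rfl

theorem sg_exp_temperate {D : Type*} [NormedAddCommGroup D] [NormedSpace ℝ D] {q : D → ℝ}
    (hq : q.HasTemperateGrowth) (h0 : ∀ x, q x ≤ 0) :
    (fun x => Real.exp (q x)).HasTemperateGrowth := by
  have := Function.HasTemperateGrowth.comp' (g := Real.exp) (t := Set.Iic 0) (f := q)
    (by rintro _ ⟨x, rfl⟩; exact h0 x) (uniqueDiffOn_Iic 0) Real.contDiff_exp.contDiffOn ?_ hq
  · exact this
  intro N
  refine ⟨0, 1, zero_le_one, fun m _ x hx => ?_⟩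
  rw [norm_iteratedFDerivWithin_eq_norm_iteratedDerivWithin,
    iteratedDerivWithin_eq_iteratedDeriv (uniqueDiffOn_Iic 0) (Real.contDiff_exp.contDiffAt) hx, iteratedDeriv_eq_iterate, Real.iter_deriv_exp]
  simpa using hx


instance sg_haar (n : ℕ) :
    (volume : Measure ((Fin n → ℝ) × (Fin n → ℝ))).IsAddHaarMeasure :=
  Measure.prod.instIsAddHaarMeasure volume volume

theorem sg_A {n : ℕ} (σ : 𝓢((Fin n → ℝ) × (Fin n → ℝ), ℝ))
    (S : 𝓢((Fin n → ℝ) × (Fin n → ℝ), ℂ))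
    (hS : ∀ x ξ, ((σ (x, ξ) : ℝ) : ℂ) = ∫ p, S p * expi (dotp x p.1 + dotp ξ p.2))
    (ε : ℝ) (g : 𝓢(Fin n → ℝ, ℂ)) (x y : Fin n → ℝ) :
    (∫ ξ, expi (dotp y ξ) * ((σ (x, ε • ξ) : ℝ) : ℂ) * FT g ξ) =
      ∫ p : (Fin n → ℝ) × (Fin n → ℝ), S p * expi (dotp x p.1) * g (y + ε • p.2) := by
  obtain ⟨G, hG, hinv⟩ := sg_fourier_one g
  have cS := S.continuous
  have cG := G.continuous
  have h1 : ∀ ξ, expi (dotp y ξ) * ((σ (x, ε • ξ) : ℝ) : ℂ) * FT g ξ =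
      ∫ p : (Fin n → ℝ) × (Fin n → ℝ),
        expi (dotp y ξ) * (S p * expi (dotp x p.1 + dotp (ε • ξ) p.2)) * G ξ := by
    intro ξ
    rw [hS, hG, ← integral_const_mul, ← integral_mul_const]
  simp_rw [h1]
  rw [integral_integral_swap]
  · congr 1; ext p
    rw [hinv, ← integral_const_mul]
    congr 1; ext ξ
    rw [sg_dotp_add, sg_expi_add, sg_expi_add, sg_dotp_smul, sg_dotp_smul, sg_dotp_comm ξ p.2]
    ring
  · refine sg_dom 1 ?_ (G.integrable.mul_prod S.integrable) ?_
    · unfold Function.uncurry; fun_prop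
    · rintro ⟨ξ, p⟩
      simp [Function.uncurry, sg_norm_expi, mul_comm]

theorem sg_B {n : ℕ} (σ : 𝓢((Fin n → ℝ) × (Fin n → ℝ), ℝ))
    (hpos : ∀ x ξ, 0 ≤ σ (x, ξ))
    (S : 𝓢((Fin n → ℝ) × (Fin n → ℝ), ℂ))
    (hS : ∀ x ξ, ((σ (x, ξ) : ℝ) : ℂ) = ∫ p, S p * expi (dotp x p.1 + dotp ξ p.2))
    (ε : ℝ) (g : 𝓢(Fin n → ℝ, ℂ)) (x : Fin n → ℝ) :
    ∃ r : ℝ, 0 ≤ r ∧ (∫ y, (∫ p : (Fin n → ℝ) × (Fin n → ℝ),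
      S p * expi (dotp x p.1) * g (y + ε • p.2)) * (starRingEnd ℂ) (g y)) = (r : ℂ) := by
  obtain ⟨G, hG, hinv⟩ := sg_fourier_one g
  obtain ⟨C, hC0, hC⟩ := sg_bdd σ
  have cσ := σ.continuous
  have cG := G.continuous
  have cg := g.continuous
  simp_rw [← sg_A σ S hS ε g x]
  refine ⟨∫ ξ, σ (x, ε • ξ) * ‖G ξ‖ ^ 2, integral_nonneg fun ξ =>
    mul_nonneg (hpos _ _) (sq_nonneg _), ?_⟩
  simp_rw [← integral_mul_const]
  rw [integral_integral_swap]
  · rw [← integral_complex_ofReal]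
    congr 1; ext ξ
    have : (starRingEnd ℂ) (G ξ) = ∫ y, expi (dotp y ξ) * (starRingEnd ℂ) (g y) := by
      rw [← hG, FT, ← integral_conj]
      congr 1; ext y
      rw [map_mul, sg_expi_conj, neg_neg, mul_comm]
    push_cast
    rw [← Complex.mul_conj', this, ← mul_assoc, ← integral_const_mul]
    congr 1; ext y
    rw [hG]; ring
  · simp_rw [hG]
    refine sg_dom C ?_ (g.integrable.mul_prod G.integrable) ?_
    · unfold Function.uncurry; fun_prop
    · rintro ⟨y, ξ⟩
      simp only [Function.uncurry, norm_mul, sg_norm_expi, RCLike.norm_conj, one_mul,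
        Complex.norm_real]
      have := hC (x, ε • ξ)
      calc ‖σ (x, ε • ξ)‖ * ‖G ξ‖ * ‖g y‖ ≤ C * ‖G ξ‖ * ‖g y‖ := by gcongr
        _ = _ := by ring

theorem sg_sq_int {n : ℕ} (f : 𝓢(Fin n → ℝ, ℂ)) : Integrable fun x => ‖f x‖ ^ 2 := by
  obtain ⟨C, hC0, hC⟩ := sg_bdd f
  have cf := f.continuous
  refine (f.integrable.norm.const_mul C).mono' (by fun_prop) (Filter.Eventually.of_forall ?_)
  intro x
  rw [norm_pow, norm_norm, sq]
  exact mul_le_mul_of_nonneg_right (hC x) (norm_nonneg _)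

theorem sg_C {n : ℕ} (f : 𝓢(Fin n → ℝ, ℂ)) (ε : ℝ) (p : (Fin n → ℝ) × (Fin n → ℝ)) :
    ‖∫ y, expi (dotp y p.1) * f (y + ε • p.2) * (starRingEnd ℂ) (f y)‖ ≤ ∫ x, ‖f x‖ ^ 2 := by
  have hi := sg_sq_int f
  have h2 : Integrable fun y => ‖f (y + ε • p.2)‖ ^ 2 := hi.comp_add_right (ε • p.2)
  calc _ ≤ ∫ y, (1/2 * ‖f (y + ε • p.2)‖ ^ 2 + 1/2 * ‖f y‖ ^ 2) := by
        refine norm_integral_le_of_norm_le ((h2.const_mul _).add (hi.const_mul _))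
          (Filter.Eventually.of_forall fun y => ?_)
        simp only [norm_mul, sg_norm_expi, RCLike.norm_conj, one_mul]
        nlinarith [sq_nonneg (‖f (y + ε • p.2)‖ - ‖f y‖)]
    _ = 1/2 * (∫ x, ‖f x‖ ^ 2) + 1/2 * (∫ x, ‖f x‖ ^ 2) := by
        rw [integral_add (h2.const_mul _) (hi.const_mul _), integral_const_mul, integral_const_mul,
          integral_add_right_eq_self (fun y => ‖f y‖ ^ 2)]
    _ = _ := by ring

theorem sg_D {n : ℕ} (S : 𝓢((Fin n → ℝ) × (Fin n → ℝ), ℂ)) (ε : ℝ) (f : 𝓢(Fin n → ℝ, ℂ)) :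
    Integrable (fun p : (Fin n → ℝ) × (Fin n → ℝ) => S p *
      ∫ y, expi (dotp y p.1) * f (y + ε • p.2) * (starRingEnd ℂ) (f y)) ∧
    (∫ y, (∫ p : (Fin n → ℝ) × (Fin n → ℝ),
      S p * expi (dotp y p.1) * f (y + ε • p.2)) * (starRingEnd ℂ) (f y)) =
    ∫ p : (Fin n → ℝ) × (Fin n → ℝ), S p *
      ∫ y, expi (dotp y p.1) * f (y + ε • p.2) * (starRingEnd ℂ) (f y) := by
  obtain ⟨C, hC0, hC⟩ := sg_bdd f
  have cf := f.continuous
  have cS := S.continuous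
  have key : Integrable (Function.uncurry fun (y : Fin n → ℝ) (p : (Fin n → ℝ) × (Fin n → ℝ)) =>
      S p * expi (dotp y p.1) * f (y + ε • p.2) * (starRingEnd ℂ) (f y)) (volume.prod volume) := by
    refine sg_dom C ?_ (f.integrable.mul_prod S.integrable) ?_
    · unfold Function.uncurry; fun_prop
    · rintro ⟨y, p⟩
      simp only [Function.uncurry, norm_mul, sg_norm_expi, RCLike.norm_conj, mul_one]
      calc ‖S p‖ * ‖f (y + ε • p.2)‖ * ‖f y‖ ≤ ‖S p‖ * C * ‖f y‖ := by gcongr; exact hC _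
        _ = _ := by ring
  have e : ∀ p : (Fin n → ℝ) × (Fin n → ℝ), S p *
      (∫ y, expi (dotp y p.1) * f (y + ε • p.2) * (starRingEnd ℂ) (f y)) = 
      ∫ y, S p * expi (dotp y p.1) * f (y + ε • p.2) * (starRingEnd ℂ) (f y) := by
    intro p
    rw [← integral_const_mul]; congr 1; ext y; ring
  simp_rw [e, ← integral_mul_const]
  exact ⟨key.integral_prod_right, integral_integral_swap key⟩


noncomputable def sgM {n : ℕ} (ε : ℝ) (p : (Fin n → ℝ) × (Fin n → ℝ)) : ℂ :=
  Complex.exp ((Real.pi * ε * dotp p.1 p.2 : ℝ) * Complex.I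
    - (Real.pi * ε * (dotp p.2 p.2 / 4 + dotp p.1 p.1) : ℝ))

noncomputable def sga {n : ℕ} (ε : ℝ) (x y : Fin n → ℝ) : ℝ :=
  Real.exp (-(Real.pi / (2 * ε)) * dotp (y - x) (y - x))

theorem sg_dotp_self_nonneg {n : ℕ} (x : Fin n → ℝ) : 0 ≤ dotp x x :=
  Finset.sum_nonneg fun i _ => mul_self_nonneg _

theorem sg_exp_sub_one {z : ℂ} (hz : z.re ≤ 0) : ‖Complex.exp z - 1‖ ≤ ‖z‖ := by
  have := Convex.norm_image_sub_le_of_norm_hasDerivWithin_le (𝕜 := ℂ) (f := Complex.exp)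
    (f' := Complex.exp) (s := {w : ℂ | w.re ≤ 0}) (C := 1) (x := 0) (y := z)
    (fun w _ => (Complex.hasDerivAt_exp w).hasDerivWithinAt)
    (fun w hw => by rw [Complex.norm_exp]; exact Real.exp_le_one_iff.2 hw)
    (convex_halfSpace_re_le 0) (by simp) hz
  simpa using this

theorem sg_dotp_abs {n : ℕ} (x y : Fin n → ℝ) : |dotp x y| ≤ n * (‖x‖ * ‖y‖) := by
  calc |dotp x y| ≤ ∑ i, |x i * y i| := Finset.abs_sum_le_sum_abs _ _
    _ ≤ ∑ i : Fin n, ‖x‖ * ‖y‖ := by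
        refine Finset.sum_le_sum fun i _ => ?_
        rw [abs_mul]
        exact mul_le_mul (norm_le_pi_norm x i) (norm_le_pi_norm y i) (abs_nonneg _) (norm_nonneg _)
    _ = _ := by simp

theorem sgM_norm_le {n : ℕ} {ε : ℝ} (hε : 0 < ε) (p : (Fin n → ℝ) × (Fin n → ℝ)) :
    ‖sgM ε p‖ ≤ 1 := by
  unfold sgM
  rw [Complex.norm_exp]
  have h1 := sg_dotp_self_nonneg p.1
  have h2 := sg_dotp_self_nonneg p.2
  have := Real.pi_pos
  refine Real.exp_le_one_iff.2 ?_
  rw [Complex.sub_re, Complex.re_ofReal_mul, Complex.I_re, Complex.ofReal_re, mul_zero, zero_sub,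
    neg_nonpos]
  positivity

theorem sgM_bound {n : ℕ} {ε : ℝ} (hε : 0 < ε) (p : (Fin n → ℝ) × (Fin n → ℝ)) :
    ‖sgM ε p - 1‖ ≤ (3 * Real.pi * n) * ε * ‖p‖ ^ 2 := by
  have h1 := sg_dotp_self_nonneg p.1
  have h2 := sg_dotp_self_nonneg p.2
  have hpi := Real.pi_pos
  have n1 : ‖p.1‖ ≤ ‖p‖ := norm_fst_le p
  have n2 : ‖p.2‖ ≤ ‖p‖ := norm_snd_le p
  have b : ∀ x y : Fin n → ℝ, ‖x‖ ≤ ‖p‖ → ‖y‖ ≤ ‖p‖ → |dotp x y| ≤ n * ‖p‖ ^ 2 := by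
    intro x y hx hy
    refine (sg_dotp_abs x y).trans ?_
    rw [sq]; gcongr
  have b1 := b _ _ n1 n2
  have b2 := (le_abs_self _).trans (b _ _ n1 n1)
  have b3 := (le_abs_self _).trans (b _ _ n2 n2)
  unfold sgM
  refine (sg_exp_sub_one ?_).trans ?_
  · rw [Complex.sub_re, Complex.re_ofReal_mul, Complex.I_re, Complex.ofReal_re, mul_zero, zero_sub,
      neg_nonpos]
    positivity
  · refine (norm_sub_le _ _).trans ?_
    rw [norm_mul, Complex.norm_I, mul_one, Complex.norm_real, Complex.norm_real, Real.norm_eq_abs,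
      Real.norm_eq_abs, abs_mul, abs_of_pos (mul_pos hpi hε),
      abs_of_nonneg (by positivity : 0 ≤ Real.pi * ε * (dotp p.2 p.2 / 4 + dotp p.1 p.1)), ← mul_add]
    have : |dotp p.1 p.2| + (dotp p.2 p.2 / 4 + dotp p.1 p.1) ≤ 3 * (n * ‖p‖ ^ 2) := by linarith
    calc _ ≤ Real.pi * ε * (3 * (n * ‖p‖ ^ 2)) := by gcongr
      _ = _ := by ring

theorem sgM_cont {n : ℕ} (ε : ℝ) : Continuous (sgM (n := n) ε) := by
  unfold sgM; fun_prop

theorem sga_le {n : ℕ} {ε : ℝ} (hε : 0 < ε) (x y : Fin n → ℝ) : |sga ε x y| ≤ 1 := by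
  unfold sga
  rw [Real.abs_exp, Real.exp_le_one_iff, neg_mul, neg_nonpos]
  have := sg_dotp_self_nonneg (y - x)
  have := Real.pi_pos
  positivity

theorem sga_cont {n : ℕ} (ε : ℝ) : Continuous fun q : (Fin n → ℝ) × (Fin n → ℝ) => sga ε q.1 q.2 := by
  unfold sga; fun_prop

theorem sg_gauss {n : ℕ} {ε : ℝ} (hε : 0 < ε) (p : (Fin n → ℝ) × (Fin n → ℝ)) (y : Fin n → ℝ) :
    (∫ x, expi (dotp x p.1) * ((sga ε x (y + ε • p.2) : ℝ) : ℂ) * ((sga ε x y : ℝ) : ℂ)) =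
      ((ε ^ ((n : ℝ) / 2) : ℝ) : ℂ) * (sgM ε p * expi (dotp y p.1)) := by
  have hpi := Real.pi_pos
  have hb : 0 < ((Real.pi / ε : ℝ) : ℂ).re := by rw [Complex.ofReal_re]; positivity
  have key := GaussianFourier.integral_cexp_neg_mul_sum_add (ι := Fin n) hb
    (fun i => ((Real.pi / ε * (2 * y i + ε * p.2 i) : ℝ) : ℂ) + 2 * Real.pi * Complex.I * p.1 i)
  have hπ : (Real.pi : ℂ) ≠ 0 := by exact_mod_cast hpi.ne'
  have hε' : (ε : ℂ) ≠ 0 := by exact_mod_cast hε.ne'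
  set K : ℂ := Complex.exp (-(Real.pi / (2 * ε)) * ∑ i, ((y i : ℂ) ^ 2 + (y i + ε * p.2 i) ^ 2))
    with hK
  have h1 : ∀ x : Fin n → ℝ,
      expi (dotp x p.1) * ((sga ε x (y + ε • p.2) : ℝ) : ℂ) * ((sga ε x y : ℝ) : ℂ) =
      K * Complex.exp (-((Real.pi / ε : ℝ) : ℂ) * ∑ i, (x i : ℂ) ^ 2 + ∑ i,
        (((Real.pi / ε * (2 * y i + ε * p.2 i) : ℝ) : ℂ) + 2 * Real.pi * Complex.I * p.1 i) * x i) := by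
    intro x
    rw [hK, expi, sga, sga, Complex.ofReal_exp, Complex.ofReal_exp, ← Complex.exp_add,
      ← Complex.exp_add, ← Complex.exp_add]
    congr 1
    simp only [dotp, Complex.ofReal_sum, Complex.ofReal_mul, Complex.ofReal_neg, Finset.mul_sum,
      ← Finset.sum_add_distrib, Pi.sub_apply, Pi.add_apply, Pi.smul_apply, smul_eq_mul]
    refine Finset.sum_congr rfl fun i _ => ?_
    push_cast
    field_simp
    ring
  simp_rw [h1]
  rw [integral_const_mul, key]
  have h2 : ((Real.pi : ℂ) / ((Real.pi / ε : ℝ) : ℂ)) ^ ((Fintype.card (Fin n) : ℂ) / 2) =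
      ((ε ^ ((n : ℝ) / 2) : ℝ) : ℂ) := by
    rw [Complex.ofReal_cpow hε.le]
    congr 1
    · push_cast; field_simp
    · simp
  rw [h2, mul_left_comm]
  congr 1
  rw [hK, sgM, expi, ← Complex.exp_add, ← Complex.exp_add]
  congr 1
  simp only [dotp, Complex.ofReal_sum, Complex.ofReal_mul, Complex.ofReal_neg, Complex.ofReal_add,
    Complex.ofReal_div, Finset.mul_sum, Finset.sum_mul, Finset.sum_div,
      ← Finset.sum_add_distrib, ← Finset.sum_sub_distrib]
  refine Finset.sum_congr rfl fun i _ => ?_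
  push_cast
  field_simp
  ring_nf
  simp only [Complex.I_sq]
  ring

theorem sga_mul {n : ℕ} {ε : ℝ} (hε : 0 < ε) (f : 𝓢(Fin n → ℝ, ℂ)) (x : Fin n → ℝ) :
    ∃ g : 𝓢(Fin n → ℝ, ℂ), ∀ y, g y = ((sga ε x y : ℝ) : ℂ) * f y := by
  have hpi := Real.pi_pos
  have ht : (fun y => sga ε x y).HasTemperateGrowth := by
    unfold sga
    refine sg_exp_temperate ?_ ?_
    · unfold dotp
      have : ∀ i, (fun y : Fin n → ℝ => (y - x) i).HasTemperateGrowth := by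
        intro i
        have h := (ContinuousLinearMap.proj (R := ℝ) (φ := fun _ : Fin n => ℝ) i).hasTemperateGrowth
        exact h.sub (Function.HasTemperateGrowth.const (x i))
      refine (Function.HasTemperateGrowth.const _).mul ?_
      exact Function.HasTemperateGrowth.sum fun i _ => (this i).mul (this i)
    · intro y
      have := sg_dotp_self_nonneg (y - x)
      rw [neg_mul, neg_nonpos]; positivity
  refine ⟨SchwartzMap.smulLeftCLM ℂ (fun y => sga ε x y) f, fun y => ?_⟩
  rw [SchwartzMap.smulLeftCLM_apply_apply ht, Complex.real_smul]

theorem sga_int {n : ℕ} {ε : ℝ} (hε : 0 < ε) (f : 𝓢(Fin n → ℝ, ℂ)) :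
    Integrable (fun q : (Fin n → ℝ) × (Fin n → ℝ) => ((sga ε q.1 q.2 : ℝ) : ℂ) * f q.2)
      (volume.prod volume) := by
  have hpi := Real.pi_pos
  have hb : 0 < ((Real.pi / (2 * ε) : ℝ) : ℂ).re := by rw [Complex.ofReal_re]; positivity
  have h := GaussianFourier.integrable_cexp_neg_mul_sum_add (ι := Fin n) hb 0
  have h3 := f.integrable (μ := volume).convolution_integrand (ContinuousLinearMap.mul ℝ ℂ) h
  refine h3.congr (Filter.Eventually.of_forall ?_)
  rintro ⟨x, y⟩
  simp only [ContinuousLinearMap.mul_apply', sga, Complex.ofReal_exp, dotp]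
  rw [mul_comm]
  congr 2
  push_cast
  simp only [Pi.zero_apply, zero_mul, Finset.sum_const_zero, add_zero, neg_mul, Pi.sub_apply]
  congr 2
  refine Finset.sum_congr rfl fun i _ => ?_
  push_cast
  ring


theorem sg_F {n : ℕ} (σ : 𝓢((Fin n → ℝ) × (Fin n → ℝ), ℝ))
    (hpos : ∀ x ξ, 0 ≤ σ (x, ξ))
    (S : 𝓢((Fin n → ℝ) × (Fin n → ℝ), ℂ))
    (hS : ∀ x ξ, ((σ (x, ξ) : ℝ) : ℂ) = ∫ p, S p * expi (dotp x p.1 + dotp ξ p.2))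
    {ε : ℝ} (hε : 0 < ε) (f : 𝓢(Fin n → ℝ, ℂ)) :
    0 ≤ (∫ p : (Fin n → ℝ) × (Fin n → ℝ), sgM ε p * (S p *
      ∫ y, expi (dotp y p.1) * f (y + ε • p.2) * (starRingEnd ℂ) (f y))).re := by
  obtain ⟨C, hC0, hC⟩ := sg_bdd f
  have cf := f.continuous
  have cS := S.continuous
  have ca : Continuous fun q : (Fin n → ℝ) × (Fin n → ℝ) => sga ε q.1 q.2 := sga_cont ε
  obtain ⟨H, hH⟩ : ∃ H : (Fin n → ℝ) × (Fin n → ℝ) → (Fin n → ℝ) × (Fin n → ℝ) → ℂ,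
    ∀ q p, H q p = S p * expi (dotp q.1 p.1) * (((sga ε q.1 (q.2 + ε • p.2) : ℝ) : ℂ) * f (q.2 + ε • p.2))
      * (starRingEnd ℂ) (((sga ε q.1 q.2 : ℝ) : ℂ) * f q.2) := ⟨_, fun _ _ => rfl⟩
  have cH : Continuous (Function.uncurry H) := by
    have c1 : Continuous fun z : ((Fin n → ℝ) × (Fin n → ℝ)) × ((Fin n → ℝ) × (Fin n → ℝ)) =>
        sga ε z.1.1 (z.1.2 + ε • z.2.2) :=
      ca.comp (g := fun q : (Fin n → ℝ) × (Fin n → ℝ) => sga ε q.1 q.2)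
        (f := fun z : ((Fin n → ℝ) × (Fin n → ℝ)) × ((Fin n → ℝ) × (Fin n → ℝ)) =>
          (z.1.1, z.1.2 + ε • z.2.2)) (by fun_prop)
    have c2 : Continuous fun z : ((Fin n → ℝ) × (Fin n → ℝ)) × ((Fin n → ℝ) × (Fin n → ℝ)) =>
        sga ε z.1.1 z.1.2 := ca.comp continuous_fst
    simp only [Function.uncurry_def, hH]
    fun_prop
  have bH : ∀ q p, ‖H q p‖ ≤ C * ‖S p‖ * ‖((sga ε q.1 q.2 : ℝ) : ℂ) * f q.2‖ := by
    intro q p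
    simp only [hH, norm_mul, sg_norm_expi, RCLike.norm_conj, mul_one, Complex.norm_real,
      Real.norm_eq_abs]
    calc _ ≤ ‖S p‖ * (1 * C) * (|sga ε q.1 q.2| * ‖f q.2‖) := by
          gcongr
          · exact sga_le hε _ _
          · exact hC _
      _ = _ := by ring
  have iH : Integrable (Function.uncurry H) ((volume.prod volume).prod volume) := by
    refine sg_dom C cH ((sga_int hε f).mul_prod S.integrable) ?_
    rintro ⟨q, p⟩
    refine (bH q p).trans (le_of_eq ?_)
    rw [norm_mul (_ * _)]; ring
  have iHp : ∀ p, Integrable (fun q => H q p) (volume.prod volume) := by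
    intro p
    refine sg_dom (C * ‖S p‖) ?_ (sga_int hε f) (fun q => bH q p)
    have c3 : Continuous fun q : (Fin n → ℝ) × (Fin n → ℝ) => (q, p) := by fun_prop
    exact cH.comp c3
  have e1 : ∫ x, ∫ y, ∫ p, H (x, y) p = ∫ p, ∫ y, ∫ x, H (x, y) p := by
    have i1 : Integrable (fun q => ∫ p, H q p) (volume.prod volume) := iH.integral_prod_left
    rw [← integral_prod (fun q => ∫ p, H q p) i1, integral_integral_swap iH]
    congr 1; ext p
    exact integral_prod_symm _ (iHp p)
  have e2 : ∀ p : (Fin n → ℝ) × (Fin n → ℝ), ∫ y, ∫ x, H (x, y) p =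
      ((ε ^ ((n : ℝ) / 2) : ℝ) : ℂ) * (sgM ε p * (S p *
      ∫ y, expi (dotp y p.1) * f (y + ε • p.2) * (starRingEnd ℂ) (f y))) := by
    intro p
    rw [← integral_const_mul, ← integral_const_mul, ← integral_const_mul]
    congr 1; ext y
    have := sg_gauss hε p y
    calc ∫ x, H (x, y) p = ∫ x, (S p * f (y + ε • p.2) * (starRingEnd ℂ) (f y)) *
          (expi (dotp x p.1) * ((sga ε x (y + ε • p.2) : ℝ) : ℂ) * ((sga ε x y : ℝ) : ℂ)) := by
          congr 1; ext x
          simp only [hH, map_mul, Complex.conj_ofReal]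
          ring
      _ = _ := by rw [integral_const_mul, this]; ring
  have e3 : ∀ x, ∃ r : ℝ, 0 ≤ r ∧ ∫ y, ∫ p, H (x, y) p = (r : ℂ) := by
    intro x
    obtain ⟨g, hg⟩ := sga_mul hε f x
    obtain ⟨r, hr, h⟩ := sg_B σ hpos S hS ε g x
    refine ⟨r, hr, ?_⟩
    rw [← h]
    congr 1; ext y
    rw [← integral_mul_const]
    congr 1; ext p
    simp only [hH, hg]
  choose r hr hre using e3
  simp_rw [hre, e2] at e1
  rw [integral_complex_ofReal, integral_const_mul] at e1
  have h4 := congrArg Complex.re e1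
  rw [Complex.re_ofReal_mul, Complex.ofReal_re] at h4
  have h5 : 0 ≤ ∫ x, r x := integral_nonneg hr
  rw [h4] at h5
  exact nonneg_of_mul_nonneg_right h5 (by positivity)

/-- semiclassical Gårding inequality on `ℝⁿ`. -/
theorem semiclassical_garding (n : ℕ) (hn : 1 ≤ n)
    (σ : SchwartzMap ((Fin n → ℝ) × (Fin n → ℝ)) ℝ)
    (K : Set (Fin n → ℝ)) (hK : IsCompact K)
    (hsupp : ∀ x ξ, x ∉ K → σ (x, ξ) = 0)
    (hpos : ∀ x ξ, 0 ≤ σ (x, ξ)) :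
    ∃ C > 0, ∀ ε : ℝ, 0 < ε → ε ≤ 1 → ∀ f : SchwartzMap (Fin n → ℝ) ℂ,
      -C * ε * (∫ x, ‖f x‖ ^ 2)
        ≤ (∫ x, (∫ ξ, expi (dotp x ξ) * ((σ (x, ε • ξ) : ℝ) : ℂ) * FT (⇑f) ξ)
            * (starRingEnd ℂ) (f x)).re := by
  obtain ⟨S, hS⟩ := sg_fourier_two σ
  have hI : 0 ≤ ∫ p, ‖p‖ ^ 2 * ‖S p‖ := integral_nonneg fun p => by positivity
  have hpi := Real.pi_pos
  refine ⟨3 * Real.pi * n * (∫ p, ‖p‖ ^ 2 * ‖S p‖) + 1, by positivity, fun ε hε _ f => ?_⟩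
  have hN : 0 ≤ ∫ x, ‖f x‖ ^ 2 := integral_nonneg fun p => by positivity
  have hA := sg_A σ S hS ε f
  have hCb := sg_C f ε
  obtain ⟨iV, hD⟩ := sg_D S ε f
  have hF := sg_F σ hpos S hS hε f
  simp_rw [fun x => hA x x]
  rw [hD]
  set V : (Fin n → ℝ) × (Fin n → ℝ) → ℂ := fun p =>
    ∫ y, expi (dotp y p.1) * f (y + ε • p.2) * (starRingEnd ℂ) (f y) with hV
  set N := ∫ x, ‖f x‖ ^ 2 with hNdef
  have iM : Integrable (fun p => sgM ε p * (S p * V p)) :=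
    iV.bdd_mul (c := 1) (sgM_cont ε).aestronglyMeasurable
      (Filter.Eventually.of_forall (sgM_norm_le hε))
  have hdiff : ‖(∫ p, sgM ε p * (S p * V p)) - ∫ p, S p * V p‖ ≤
      3 * Real.pi * n * (∫ p, ‖p‖ ^ 2 * ‖S p‖) * ε * N := by
    rw [← integral_sub iM iV]
    have : 3 * Real.pi * n * (∫ p, ‖p‖ ^ 2 * ‖S p‖) * ε * N =
        ∫ p, (3 * Real.pi * n * ε * N) * (‖p‖ ^ 2 * ‖S p‖) := by
      rw [integral_const_mul]; ring
    rw [this]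
    refine norm_integral_le_of_norm_le ((S.integrable_pow_mul volume 2).const_mul _)
      (Filter.Eventually.of_forall fun p => ?_)
    have h1 : sgM ε p * (S p * V p) - S p * V p = (sgM ε p - 1) * (S p * V p) := by ring
    rw [h1, norm_mul, norm_mul]
    calc _ ≤ ((3 * Real.pi * n) * ε * ‖p‖ ^ 2) * (‖S p‖ * N) := by
          gcongr
          · exact sgM_bound hε p
          · exact hCb p
      _ = _ := by ring
  have h2 := (Complex.abs_re_le_norm _).trans hdiff
  rw [Complex.sub_re] at h2
  have h3 := (abs_le.1 h2).2
  have h4 : 0 ≤ ε * N := by positivity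
  have h5 : 0 ≤ (∫ p, sgM ε p * (S p * V p)).re := hF
  have h6 : (∫ p, sgM ε p * (S p * V p)).re - 3 * Real.pi * n * (∫ p, ‖p‖ ^ 2 * ‖S p‖) * ε * N
      ≤ (∫ p, S p * V p).re := by linarith
  refine le_trans ?_ h6
  nlinarith
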